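/- Let H : closure(θ) × ℝ^N × S^N → ℝ be continuous and satisfy the radial monotonicity condition H(x, l·p, l·A) ≥ H(x,p,A) for all l ≥ 1 and all (x,p,A). Let M0 > 0, and for each λ > 0 let w_λ ∈ Lip_{M0}(closure(θ)) satisfy, in the viscosity sense on θ, w_λ(x) + H^{M0}(x, (1/λ)·Dw_λ(x), (1/λ)·D²w_λ(x)) ≤ 0, where H^{M0} := min{M0, H}. Suppose w_λ → w₀ uniformly on closure(θ) as λ → 0⁺. Then w₀ ∈ Lip_{M0}(closure(θ)) and w₀(x) + H̄(x, Dw₀(x), D²w₀(x)) ≤ 0 on θ in the viscosity sense, where H̄(x,p,A) := min{ M0, sup_{l>0} H(x, l·p, l·A) }. -/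

import Mathlib

/-!
The proof is the standard stability argument for viscosity subsolutions, combined with the radial
monotonicity of `H`.

Fix `l > 0` and suppose first that `w₀ - ψ` has a quadratically strict maximum at `x` on a closed
ball contained in `θ`. If `y_λ` maximises `w_λ - ψ` over that ball, then uniform convergence forces
`y_λ → x`, so `y_λ` is eventually an interior, hence local, maximum and the inequality for `w_λ`
may be used there. As soon as `λ⁻¹ ≥ l`, radial monotonicity (the Hessian is symmetric,
`hessMat_isSymm`) replaces the factor `λ⁻¹` by `l`, and letting `λ → 0⁺` gives
`w₀ x + min M0 (H x (l Dψ) (l D²ψ)) ≤ 0`; this is `strict_max_bound`.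

For a general test function `φ`, this applies to `φ + δ ‖· - x‖²`. Its gradient and Hessian at `x`
depend affinely on `δ`, so continuity of `H` allows `δ → 0⁺`, and the supremum over `l` gives the
bound on `hbar`.
-/

noncomputable section
open Set Filter

/-- The Hessian matrix of `φ : ℝ^N → ℝ` at `x`. -/
def hessMat {N : ℕ} (φ : EuclideanSpace ℝ (Fin N) → ℝ) (x : EuclideanSpace ℝ (Fin N)) :
    Matrix (Fin N) (Fin N) ℝ :=
  fun i j => iteratedFDeriv ℝ 2 φ x ![EuclideanSpace.single i 1, EuclideanSpace.single j 1]

/-- `hbar H M0 x p A = min { M0, sup_{l>0} H(x, l•p, l•A) }`.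
(Phrased as `⨆_{l>0} min M0 (H (x, l•p, l•A))`, which coincides with
`min { M0, sup_{l>0} H(x, l•p, l•A) }` computed in the extended reals, and is a genuine
real number even when `sup_{l>0} H(x, l•p, l•A) = +∞`.) -/
def hbar {N : ℕ}
    (H : EuclideanSpace ℝ (Fin N) → EuclideanSpace ℝ (Fin N) →
      Matrix (Fin N) (Fin N) ℝ → ℝ)
    (M0 : ℝ) (x p : EuclideanSpace ℝ (Fin N)) (A : Matrix (Fin N) (Fin N) ℝ) : ℝ :=
  ⨆ l : {l : ℝ // 0 < l}, min M0 (H x (l.1 • p) (l.1 • A))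

theorem hessMat_isSymm {N : ℕ} {φ : EuclideanSpace ℝ (Fin N) → ℝ} (hφ : ContDiff ℝ 2 φ)
    (x : EuclideanSpace ℝ (Fin N)) : (hessMat φ x).IsSymm := by
  have h : IsSymmSndFDerivAt ℝ φ x := hφ.contDiffAt.isSymmSndFDerivAt (by simp)
  ext i j
  simp only [Matrix.transpose_apply, hessMat, iteratedFDeriv_two_apply]
  exact h.eq _ _

theorem continuous_hessMat {N : ℕ} {φ : EuclideanSpace ℝ (Fin N) → ℝ} (hφ : ContDiff ℝ 2 φ) :
    Continuous (hessMat φ) := by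
  refine continuous_pi fun i => continuous_pi fun j => ?_
  have h := hφ.continuous_iteratedFDeriv (m := 2) le_rfl
  exact (ContinuousMultilinearMap.apply ℝ (fun _ : Fin 2 => EuclideanSpace ℝ (Fin N)) ℝ
    ![EuclideanSpace.single i 1, EuclideanSpace.single j 1]).continuous.comp h

theorem continuous_gradient {N : ℕ} {φ : EuclideanSpace ℝ (Fin N) → ℝ} (hφ : ContDiff ℝ 2 φ) :
    Continuous (gradient φ) :=
  (InnerProductSpace.toDual ℝ (EuclideanSpace ℝ (Fin N))).symm.continuous.comp
    (hφ.continuous_fderiv (by norm_num))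

theorem gradient_add_const_mul {N : ℕ} {φ q : EuclideanSpace ℝ (Fin N) → ℝ}
    (hφ : ContDiff ℝ 2 φ) (hq : ContDiff ℝ 2 q) (δ : ℝ) (x : EuclideanSpace ℝ (Fin N)) :
    gradient (φ + δ • q) x = gradient φ x + δ • gradient q x := by
  have h1 : DifferentiableAt ℝ φ x := hφ.differentiable (by norm_num) x
  have h2 : DifferentiableAt ℝ q x := hq.differentiable (by norm_num) x
  simp only [gradient]
  rw [fderiv_add h1 (h2.const_smul δ), fderiv_const_smul h2]
  simp

theorem hessMat_add_const_mul {N : ℕ} {φ q : EuclideanSpace ℝ (Fin N) → ℝ}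
    (hφ : ContDiff ℝ 2 φ) (hq : ContDiff ℝ 2 q) (δ : ℝ) (x : EuclideanSpace ℝ (Fin N)) :
    hessMat (φ + δ • q) x = hessMat φ x + δ • hessMat q x := by
  ext i j
  simp only [hessMat, Matrix.add_apply, Matrix.smul_apply]
  have hδq : ContDiff ℝ 2 (δ • q) := hq.const_smul δ
  rw [iteratedFDeriv_add_apply (i := 2) hφ.contDiffAt hδq.contDiffAt,
    iteratedFDeriv_const_smul_apply (i := 2) hq.contDiffAt]
  simp

/-- The subsolution inequality for `w0` with a fixed factor `l`, at a point where the maximum of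
`w0 - ψ` is strict with quadratic gain `δ ‖y - x‖ ^ 2`. -/
theorem strict_max_bound {N : ℕ} {θ : Set (EuclideanSpace ℝ (Fin N))}
    {H : EuclideanSpace ℝ (Fin N) → EuclideanSpace ℝ (Fin N) →
      Matrix (Fin N) (Fin N) ℝ → ℝ}
    (hH_cont : ContinuousOn
      (fun q : EuclideanSpace ℝ (Fin N) × EuclideanSpace ℝ (Fin N) ×
        Matrix (Fin N) (Fin N) ℝ => H q.1 q.2.1 q.2.2)
      (closure θ ×ˢ (univ : Set (EuclideanSpace ℝ (Fin N))) ×ˢ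
        (univ : Set (Matrix (Fin N) (Fin N) ℝ))))
    (hrad : ∀ l : ℝ, 1 ≤ l → ∀ x ∈ closure θ, ∀ (p : EuclideanSpace ℝ (Fin N))
      (A : Matrix (Fin N) (Fin N) ℝ), A.IsSymm → H x p A ≤ H x (l • p) (l • A))
    {M0 : ℝ} (hM0 : 0 < M0)
    {wlam : ℝ → EuclideanSpace ℝ (Fin N) → ℝ}
    (hw_lip : ∀ lam : ℝ, 0 < lam → ∀ x ∈ closure θ, ∀ y ∈ closure θ,
      |wlam lam x - wlam lam y| ≤ M0 * ‖x - y‖)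
    (hw_sub : ∀ lam : ℝ, 0 < lam → ∀ x ∈ θ,
      ∀ φ : EuclideanSpace ℝ (Fin N) → ℝ, ContDiff ℝ 2 φ →
      IsLocalMaxOn (fun y => wlam lam y - φ y) θ x →
      wlam lam x + min M0 (H x (lam⁻¹ • gradient φ x) (lam⁻¹ • hessMat φ x)) ≤ 0)
    {w0 : EuclideanSpace ℝ (Fin N) → ℝ}
    (hconv : TendstoUniformlyOn wlam w0 (nhdsWithin 0 (Ioi 0)) (closure θ))
    (hw0 : ContinuousOn w0 (closure θ))
    {x : EuclideanSpace ℝ (Fin N)} {r : ℝ} (hr : 0 < r) (hball : Metric.closedBall x r ⊆ θ)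
    {ψ : EuclideanSpace ℝ (Fin N) → ℝ} (hψ : ContDiff ℝ 2 ψ) {δ : ℝ} (hδ : 0 < δ)
    (hmax : ∀ y ∈ Metric.closedBall x r, w0 y - ψ y + δ * ‖y - x‖ ^ 2 ≤ w0 x - ψ x)
    {l : ℝ} (hl : 0 < l) :
    w0 x + min M0 (H x (l • gradient ψ x) (l • hessMat ψ x)) ≤ 0 := by
  have hcl : Metric.closedBall x r ⊆ closure θ := hball.trans subset_closure
  have hxB : x ∈ Metric.closedBall x r := Metric.mem_closedBall_self hr.le
  have hnx : closure θ ∈ nhds x := mem_of_superset (Metric.closedBall_mem_nhds x hr) hcl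
  have hex : ∀ lam : ℝ, ∃ y ∈ Metric.closedBall x r, 0 < lam →
      ∀ z ∈ Metric.closedBall x r, wlam lam z - ψ z ≤ wlam lam y - ψ y := by
    intro lam
    by_cases hlam : 0 < lam
    · have hc : ContinuousOn (wlam lam) (closure θ) := by
        refine (LipschitzOnWith.of_dist_le_mul (K := ⟨M0, hM0.le⟩) ?_).continuousOn
        intro a ha b hb
        rw [Real.dist_eq, dist_eq_norm]
        exact hw_lip lam hlam a ha b hb
      obtain ⟨y, hy, hym⟩ := (isCompact_closedBall x r).exists_isMaxOn ⟨x, hxB⟩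
        ((hc.mono hcl).sub hψ.continuous.continuousOn)
      exact ⟨y, hy, fun _ z hz => hym hz⟩
    · exact ⟨x, hxB, fun h => absurd h hlam⟩
  choose Y hYB hYmax using hex
  have hpos : ∀ᶠ lam : ℝ in nhdsWithin 0 (Ioi 0), 0 < lam := self_mem_nhdsWithin
  have hYlim : Tendsto Y (nhdsWithin 0 (Ioi 0)) (nhds x) := by
    rw [Metric.tendsto_nhds]
    intro ε hε
    have hη : 0 < δ * ε ^ 2 / 2 := by positivity
    filter_upwards [Metric.tendstoUniformlyOn_iff.1 hconv _ hη, hpos] with lam hu hlam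
    have h1 := hu x (hcl hxB)
    have h2 := hu (Y lam) (hcl (hYB lam))
    rw [Real.dist_eq, abs_lt] at h1 h2
    have h3 := hYmax lam hlam x hxB
    have h4 := hmax (Y lam) (hYB lam)
    have h5 : δ * ‖Y lam - x‖ ^ 2 < δ * ε ^ 2 := by linarith [h1.1, h1.2, h2.1, h2.2]
    rw [dist_eq_norm]
    exact lt_of_pow_lt_pow_left₀ 2 hε.le (lt_of_mul_lt_mul_left h5 hδ.le)
  have hwlim : Tendsto (fun lam => wlam lam (Y lam)) (nhdsWithin 0 (Ioi 0)) (nhds (w0 x)) := by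
    have hd : Tendsto (fun lam => w0 (Y lam)) (nhdsWithin 0 (Ioi 0)) (nhds (w0 x)) :=
      (hw0.continuousAt hnx).tendsto.comp hYlim
    refine tendsto_of_tendsto_of_dist hd ?_
    rw [Metric.tendsto_nhds]
    intro ε hε
    filter_upwards [Metric.tendstoUniformlyOn_iff.1 hconv ε hε] with lam hu
    simpa using hu (Y lam) (hcl (hYB lam))
  have hHlim : Tendsto (fun lam => H (Y lam) (l • gradient ψ (Y lam)) (l • hessMat ψ (Y lam)))
      (nhdsWithin 0 (Ioi 0)) (nhds (H x (l • gradient ψ x) (l • hessMat ψ x))) := by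
    have hc : ContinuousOn (fun y => H y (l • gradient ψ y) (l • hessMat ψ y)) (closure θ) := by
      refine hH_cont.comp (f := fun y => (y, l • gradient ψ y, l • hessMat ψ y)) ?_ ?_
      · exact (continuous_id.prodMk (((continuous_gradient hψ).const_smul l).prodMk
          ((continuous_hessMat hψ).const_smul l))).continuousOn
      · exact fun y hy => ⟨hy, mem_univ _, mem_univ _⟩
    exact (hc.continuousAt hnx).tendsto.comp hYlim
  refine le_of_tendsto (hwlim.add (tendsto_const_nhds.min hHlim)) ?_
  have hsmall : ∀ᶠ lam : ℝ in nhdsWithin 0 (Ioi 0), lam < l⁻¹ :=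
    nhdsWithin_le_nhds (Iio_mem_nhds (inv_pos.2 hl))
  filter_upwards [hpos, hsmall, hYlim (Metric.ball_mem_nhds x hr)] with lam hlam hlaml hYb
  have hYθ : Y lam ∈ θ := hball (hYB lam)
  have hloc : IsLocalMaxOn (fun y => wlam lam y - ψ y) θ (Y lam) := by
    refine nhdsWithin_le_nhds ?_
    filter_upwards [Metric.isOpen_ball.mem_nhds hYb] with z hz
    exact hYmax lam hlam z (Metric.ball_subset_closedBall hz)
  have hsub := hw_sub lam hlam (Y lam) hYθ ψ hψ hloc
  have hone : 1 ≤ lam⁻¹ * l⁻¹ := by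
    rw [← mul_inv]
    refine (one_le_inv₀ (by positivity)).2 ?_
    have := mul_le_mul_of_nonneg_right hlaml.le hl.le
    rwa [inv_mul_cancel₀ hl.ne'] at this
  have hmono := hrad _ hone (Y lam) (subset_closure hYθ) (l • gradient ψ (Y lam))
    (l • hessMat ψ (Y lam)) ((hessMat_isSymm hψ _).smul l)
  rw [smul_smul, smul_smul, inv_mul_cancel_right₀ hl.ne'] at hmono
  have := min_le_min_left M0 hmono
  linarith

/- STATEMENT 9: stability of subsolutions. If each `w_λ ∈ Lip_{M0}(closure θ)` satisfies
`w_λ + min{M0, H(x, (1/λ)Dw_λ, (1/λ)D²w_λ)} ≤ 0` on `θ` in the viscosity sense, `H` is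
continuous and radially monotone, and `w_λ → w₀` uniformly on `closure θ` as `λ → 0⁺`,
then `w₀ ∈ Lip_{M0}(closure θ)` and `w₀ + H̄(x, Dw₀, D²w₀) ≤ 0` on `θ` in the viscosity
sense, where `H̄(x,p,A) = min{M0, sup_{l>0} H(x, l•p, l•A)}`. -/
theorem subsolution_limit_stability {N : ℕ} (θ : Set (EuclideanSpace ℝ (Fin N)))
    (hθne : θ.Nonempty) (hθopen : IsOpen θ) (hθbdd : Bornology.IsBounded θ)
    (H : EuclideanSpace ℝ (Fin N) → EuclideanSpace ℝ (Fin N) →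
      Matrix (Fin N) (Fin N) ℝ → ℝ)
    (hH_cont : ContinuousOn
      (fun q : EuclideanSpace ℝ (Fin N) × EuclideanSpace ℝ (Fin N) ×
        Matrix (Fin N) (Fin N) ℝ => H q.1 q.2.1 q.2.2)
      (closure θ ×ˢ (univ : Set (EuclideanSpace ℝ (Fin N))) ×ˢ
        (univ : Set (Matrix (Fin N) (Fin N) ℝ))))
    (hrad : ∀ l : ℝ, 1 ≤ l → ∀ x ∈ closure θ, ∀ (p : EuclideanSpace ℝ (Fin N))
      (A : Matrix (Fin N) (Fin N) ℝ), A.IsSymm → H x p A ≤ H x (l • p) (l • A))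
    (M0 : ℝ) (hM0 : 0 < M0)
    (wlam : ℝ → EuclideanSpace ℝ (Fin N) → ℝ)
    (hw_bd : ∀ lam : ℝ, 0 < lam → ∀ x ∈ closure θ, |wlam lam x| ≤ M0)
    (hw_lip : ∀ lam : ℝ, 0 < lam → ∀ x ∈ closure θ, ∀ y ∈ closure θ,
      |wlam lam x - wlam lam y| ≤ M0 * ‖x - y‖)
    (hw_sub : ∀ lam : ℝ, 0 < lam → ∀ x ∈ θ,
      ∀ φ : EuclideanSpace ℝ (Fin N) → ℝ, ContDiff ℝ 2 φ →
      IsLocalMaxOn (fun y => wlam lam y - φ y) θ x →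
      wlam lam x + min M0 (H x (lam⁻¹ • gradient φ x) (lam⁻¹ • hessMat φ x)) ≤ 0)
    (w0 : EuclideanSpace ℝ (Fin N) → ℝ)
    (hconv : TendstoUniformlyOn wlam w0 (nhdsWithin 0 (Ioi 0)) (closure θ)) :
    (∀ x ∈ closure θ, |w0 x| ≤ M0) ∧
    (∀ x ∈ closure θ, ∀ y ∈ closure θ, |w0 x - w0 y| ≤ M0 * ‖x - y‖) ∧
    (∀ x ∈ θ, ∀ φ : EuclideanSpace ℝ (Fin N) → ℝ, ContDiff ℝ 2 φ →
      IsLocalMaxOn (fun y => w0 y - φ y) θ x →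
      w0 x + hbar H M0 x (gradient φ x) (hessMat φ x) ≤ 0) := by
  have hbd : ∀ x ∈ closure θ, |w0 x| ≤ M0 := fun x hx =>
    le_of_tendsto (hconv.tendsto_at hx).abs (by
      filter_upwards [self_mem_nhdsWithin] with lam hlam
      exact hw_bd lam hlam x hx)
  have hlip : ∀ x ∈ closure θ, ∀ y ∈ closure θ, |w0 x - w0 y| ≤ M0 * ‖x - y‖ :=
    fun x hx y hy =>
    le_of_tendsto ((hconv.tendsto_at hx).sub (hconv.tendsto_at hy)).abs (by
      filter_upwards [self_mem_nhdsWithin] with lam hlam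
      exact hw_lip lam hlam x hx y hy)
  refine ⟨hbd, hlip, ?_⟩
  intro x hx φ hφ hmax
  have hw0 : ContinuousOn w0 (closure θ) := by
    refine (LipschitzOnWith.of_dist_le_mul (K := ⟨M0, hM0.le⟩) ?_).continuousOn
    intro a ha b hb
    rw [Real.dist_eq, dist_eq_norm]
    exact hlip a ha b hb
  have hloc : ∀ᶠ y in nhds x, w0 y - φ y ≤ w0 x - φ x := by
    have h : IsLocalMaxOn (fun y => w0 y - φ y) θ x := hmax
    rwa [IsLocalMaxOn, IsMaxFilter, hθopen.nhdsWithin_eq hx] at h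
  obtain ⟨r, hr, hrsub⟩ := Metric.nhds_basis_closedBall.mem_iff.1
    (inter_mem (hθopen.mem_nhds hx) hloc)
  set q : EuclideanSpace ℝ (Fin N) → ℝ := fun y => ‖y - x‖ ^ 2 with hq_def
  have hq : ContDiff ℝ 2 q := (contDiff_id.sub contDiff_const).norm_sq ℝ
  have key : ∀ l : ℝ, 0 < l →
      w0 x + min M0 (H x (l • gradient φ x) (l • hessMat φ x)) ≤ 0 := by
    intro l hl
    have hδ : ∀ δ : ℝ, 0 < δ → w0 x + min M0 (H x (l • (gradient φ x + δ • gradient q x))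
        (l • (hessMat φ x + δ • hessMat q x))) ≤ 0 := by
      intro δ hδ
      rw [← gradient_add_const_mul hφ hq, ← hessMat_add_const_mul hφ hq]
      refine strict_max_bound hH_cont hrad hM0 hw_lip hw_sub hconv hw0 hr
        (fun y hy => (hrsub hy).1) (hφ.add (hq.const_smul δ)) hδ ?_ hl
      intro y hy
      have h : w0 y - φ y ≤ w0 x - φ x := (hrsub hy).2
      simp only [smul_eq_mul, hq_def, sub_self, norm_zero]
      linarith
    have hc : Continuous (fun δ : ℝ => H x (l • (gradient φ x + δ • gradient q x))
        (l • (hessMat φ x + δ • hessMat q x))) := by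
      refine hH_cont.comp_continuous (f := fun δ : ℝ => (x,
        l • (gradient φ x + δ • gradient q x), l • (hessMat φ x + δ • hessMat q x))) ?_ ?_
      · fun_prop
      · exact fun _ => ⟨subset_closure hx, mem_univ _, mem_univ _⟩
    have hlim : Tendsto (fun δ : ℝ => w0 x + min M0 (H x (l • (gradient φ x + δ • gradient q x))
        (l • (hessMat φ x + δ • hessMat q x)))) (nhdsWithin 0 (Ioi 0))
        (nhds (w0 x + min M0 (H x (l • gradient φ x) (l • hessMat φ x)))) := by
      refine Tendsto.mono_left ?_ nhdsWithin_le_nhds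
      exact (continuous_const.add (continuous_const.min hc)).tendsto' 0 _ (by simp)
    refine le_of_tendsto hlim ?_
    filter_upwards [self_mem_nhdsWithin] with δ hpos
    exact hδ δ hpos
  have : Nonempty {l : ℝ // 0 < l} := ⟨⟨1, one_pos⟩⟩
  have hsup : hbar H M0 x (gradient φ x) (hessMat φ x) ≤ -w0 x :=
    ciSup_le fun l => by linarith [key l.1 l.2]
  linarith
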